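/- Let N be a subspace of K^V and define λ_N(U) = (dim N − dim(N×(V∖U)) − dim(N×U))/2 for U ⊆ V. Then λ_N is submodular: λ_N(X) + λ_N(Y) ≥ λ_N(X∪Y) + λ_N(X∩Y) for all X, Y ⊆ V. -/

import Mathlib

variable {F : Type*} [Field F] {V : Type*} [Fintype V] [DecidableEq V]

/-- Restriction of chains to a subset `X` of the ground set. -/
def res (F K : Type*) [Semiring F] [AddCommMonoid K] [Module F K]
    {V : Type*} (X : Finset V) : (V → K) →ₗ[F] ({x // x ∈ X} → K) :=
  LinearMap.funLeft F K Subtype.val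

/-- Chains vanishing outside `X`. -/
def vanish (F : Type*) [Semiring F] {K : Type*} [AddCommMonoid K] [Module F K]
    {V : Type*} (X : Finset V) : Submodule F (V → K) where
  carrier := {f | ∀ v ∉ X, f v = 0}
  add_mem' := by
    intro a b ha hb v hv
    simp only [Pi.add_apply, ha v hv, hb v hv, add_zero]
  zero_mem' := by intro v hv; rfl
  smul_mem' := by
    intro c a ha v hv
    simp only [Pi.smul_apply, ha v hv, smul_zero]

/-- `N×X`, the restriction to `X` of the chains in `N` vanishing outside `X`. -/
def timesTo {K : Type*} [AddCommGroup K] [Module F K]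
    (N : Submodule F (V → K)) (X : Finset V) : Submodule F ({x // x ∈ X} → K) :=
  (N ⊓ vanish F X).map (res F K X)


/-- The connectivity function
`λ_N(U) = (dim N − dim(N×(V∖U)) − dim(N×U)) / 2` of a chain-group `N`,
as a rational number. -/
noncomputable def lam {W : Type*} [Fintype W] [DecidableEq W]
    {K : Type*} [AddCommGroup K] [Module F K]
    (N : Submodule F (W → K)) (U : Finset W) : ℚ :=
  ((Module.finrank F N : ℚ) - (Module.finrank F (timesTo N Uᶜ) : ℚ)
    - (Module.finrank F (timesTo N U) : ℚ)) / 2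

theorem finrank_timesTo {V K : Type*} [AddCommGroup K] [Module F K]
    (N : Submodule F (V → K)) (X : Finset V) :
    Module.finrank F (timesTo N X) = Module.finrank F ↥(N ⊓ vanish F X) := by
  have hinj : Function.Injective ((res F K X).domRestrict (N ⊓ vanish F X)) := by
    rintro ⟨f, hf⟩ ⟨g, hg⟩ hfg
    ext v
    by_cases hv : v ∈ X
    · exact congrFun hfg ⟨v, hv⟩
    · exact (hf.2 v hv).trans (hg.2 v hv).symm
  rw [timesTo, ← LinearMap.range_domRestrict]
  exact LinearMap.finrank_range_of_inj hinj

theorem vanish_inter (F : Type*) [Semiring F] {K : Type*} [AddCommMonoid K] [Module F K]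
    {V : Type*} [DecidableEq V] (X Y : Finset V) :
    vanish F (K := K) (X ∩ Y) = vanish F X ⊓ vanish F Y := by
  ext f
  refine ⟨fun h => ⟨fun v hv => h v fun hm => hv (Finset.mem_inter.1 hm).1,
    fun v hv => h v fun hm => hv (Finset.mem_inter.1 hm).2⟩, fun h v hv => ?_⟩
  by_cases hx : v ∈ X
  · exact h.2 v fun hy => hv (Finset.mem_inter.2 ⟨hx, hy⟩)
  · exact h.1 v hx

theorem vanish_mono (F : Type*) [Semiring F] {K : Type*} [AddCommMonoid K] [Module F K]
    {V : Type*} {X Y : Finset V} (h : X ⊆ Y) :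
    vanish F (K := K) X ≤ vanish F Y :=
  fun _ hf v hv => hf v fun hx => hv (h hx)

/-- The function `X ↦ dim (N×X)` is supermodular. -/
theorem finrank_timesTo_supermodular {K : Type*} [AddCommGroup K] [Module F K]
    [FiniteDimensional F K] (N : Submodule F (V → K)) (X Y : Finset V) :
    Module.finrank F (timesTo N X) + Module.finrank F (timesTo N Y) ≤
      Module.finrank F (timesTo N (X ∪ Y)) + Module.finrank F (timesTo N (X ∩ Y)) := by
  simp only [finrank_timesTo]
  rw [← Submodule.finrank_sup_add_finrank_inf_eq, vanish_inter,
    inf_inf_distrib_left N (vanish F X)]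
  gcongr
  exact Submodule.finrank_mono (sup_le
    (inf_le_inf_left N (vanish_mono F Finset.subset_union_left))
    (inf_le_inf_left N (vanish_mono F Finset.subset_union_right)))

/-- The connectivity function `λ_N` is submodular. -/
theorem lam_submodular {K : Type*} [AddCommGroup K] [Module F K]
    [FiniteDimensional F K] (N : Submodule F (V → K)) (X Y : Finset V) :
    lam N (X ∪ Y) + lam N (X ∩ Y) ≤ lam N X + lam N Y := by
  have h := finrank_timesTo_supermodular N X Y
  have hc := finrank_timesTo_supermodular N Xᶜ Yᶜ
  rw [← Finset.compl_inter, ← Finset.compl_union] at hc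
  qify at h hc
  unfold lam
  linarith
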